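/- Let 𝔽 be the field of real algebraic numbers. If an ortholattice term t is a tautology of the subspace ortholattice L(𝔽^{2^n}) for every n ≥ 0, then t is a tautology of the subspace ortholattice L(ℂ^k) for every k ≥ 1. -/

import Mathlib

set_option synthInstance.maxHeartbeats 1000000

/-- The field of real algebraic numbers, viewed as a subfield of `ℝ`
(the relative algebraic closure of `ℚ` in `ℝ`). -/
noncomputable abbrev RealAlg : Type := algebraicClosure ℚ ℝ

/-- The orthogonal complement of a subspace of `F^m` with respect to the standard
bilinear form `⟨x, y⟩ = ∑ xᵢ yᵢ`. -/
def orthF {F : Type*} [Field F] {m : ℕ} (U : Submodule F (Fin m → F)) :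
    Submodule F (Fin m → F) where
  carrier := {y | ∀ x ∈ U, ∑ i, x i * y i = 0}
  add_mem' := by
    intro p q hp hq x hx
    simp only [Pi.add_apply, mul_add, Finset.sum_add_distrib, hp x hx, hq x hx, add_zero]
  zero_mem' := by intro x hx; simp
  smul_mem' := by
    intro c p hp x hx
    simp only [Pi.smul_apply, smul_eq_mul, mul_left_comm, ← Finset.mul_sum, hp x hx, mul_zero]

/-- Ortholattice terms in the operations ∧, ∨, ', 0, 1 with variables indexed by ℕ. -/
inductive OLTerm : Type
  | var : ℕ → OLTerm
  | zero : OLTerm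
  | one : OLTerm
  | inf : OLTerm → OLTerm → OLTerm
  | sup : OLTerm → OLTerm → OLTerm
  | compl : OLTerm → OLTerm

/-- Evaluation of an ortholattice term in the ortholattice `L(F^m)` of all linear
subspaces of `F^m`, with ' interpreted as the orthogonal complement for the standard
bilinear form. -/
def OLTerm.evalF {F : Type*} [Field F] {m : ℕ} (v : ℕ → Submodule F (Fin m → F)) :
    OLTerm → Submodule F (Fin m → F)
  | var i => v i
  | zero => ⊥
  | one => ⊤
  | inf t s => t.evalF v ⊓ s.evalF v
  | sup t s => t.evalF v ⊔ s.evalF v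
  | compl t => orthF (t.evalF v)

/-- Evaluation of an ortholattice term in the ortholattice of all linear subspaces of a
complex inner product space. -/
noncomputable def OLTerm.evalSub {H : Type*} [NormedAddCommGroup H]
    [InnerProductSpace ℂ H] (v : ℕ → Submodule ℂ H) : OLTerm → Submodule ℂ H
  | var i => v i
  | zero => ⊥
  | one => ⊤
  | inf t s => t.evalSub v ⊓ s.evalSub v
  | sup t s => t.evalSub v ⊔ s.evalSub v
  | compl t => (t.evalSub v)ᗮ

open MvPolynomial in
def SpecPt {N : ℕ} (x : Fin N → ℝ) (z : Fin N → RealAlg) : Prop :=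
  ∀ p : MvPolynomial (Fin N) ℚ, aeval x p = 0 → aeval z p = 0

lemma sign_change (g : Polynomial ℝ) (θ δ : ℝ) (hδ : 0 < δ) (h0 : g.eval θ = 0)
    (h1 : g.derivative.eval θ ≠ 0) :
    ∃ a b, θ - δ < a ∧ a < b ∧ b < θ + δ ∧ g.eval a * g.eval b < 0 := by
  obtain ⟨h, rfl⟩ := Polynomial.dvd_iff_isRoot.mpr h0
  have hh : h.eval θ ≠ 0 := by
    simpa [Polynomial.derivative_mul] using h1
  have hpos : 0 < h.eval θ * h.eval θ := mul_self_pos.mpr hh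
  have hc : Continuous fun x => h.eval x * h.eval θ := by fun_prop
  have hev : ∀ᶠ x in nhds θ, 0 < h.eval x * h.eval θ :=
    hc.continuousAt.eventually (lt_mem_nhds hpos)
  obtain ⟨r, hr, hr'⟩ := Metric.eventually_nhds_iff.mp hev
  obtain ⟨s, hs, hsr⟩ := exists_between (lt_min hr hδ)
  have hsr1 : s < r := hsr.trans_le (min_le_left _ _)
  have hsr2 : s < δ := hsr.trans_le (min_le_right _ _)
  refine ⟨θ - s, θ + s, by linarith, by linarith, by linarith, ?_⟩
  have ha := hr' (y := θ - s) (by simp [Real.dist_eq, abs_of_pos hs, hsr1])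
  have hb := hr' (y := θ + s) (by simp [Real.dist_eq, abs_of_pos hs, hsr1])
  have hab : 0 < h.eval (θ - s) * h.eval (θ + s) := by
    have := mul_pos ha hb
    by_contra hcon
    push Not at hcon
    nlinarith
  simp only [Polynomial.eval_mul, Polynomial.eval_sub, Polynomial.eval_X, Polynomial.eval_C]
  have : (θ - s - θ) * h.eval (θ - s) * ((θ + s - θ) * h.eval (θ + s))
    = - (s * s * (h.eval (θ - s) * h.eval (θ + s))) := by ring
  rw [this]
  have := mul_pos (mul_pos hs hs) hab
  linarith

lemma ivt_poly (g : Polynomial ℝ) (a b : ℝ) (hab : a < b) (h : g.eval a * g.eval b < 0) :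
    ∃ c, a ≤ c ∧ c ≤ b ∧ g.eval c = 0 := by
  have hc : ContinuousOn (fun x => g.eval x) (Set.uIcc a b) := by fun_prop
  have := intermediate_value_uIcc hc
  have h0 : (0:ℝ) ∈ Set.uIcc (g.eval a) (g.eval b) := by
    rw [Set.mem_uIcc]
    rcases mul_neg_iff.mp h with h | h
    · right; exact ⟨h.2.le, h.1.le⟩
    · left; exact ⟨h.1.le, h.2.le⟩
  obtain ⟨c, hc, hc'⟩ := this h0
  rw [Set.uIcc_of_le hab.le] at hc
  exact ⟨c, hc.1, hc.2, hc'⟩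

lemma aeval_cons {n : ℕ} {K : Type*} [Field K] [Algebra ℚ K] (θ : K) (y : Fin n → K)
    (p : MvPolynomial (Fin (n+1)) ℚ) :
    MvPolynomial.aeval (Fin.cons θ y : Fin (n+1) → K) p =
      ((MvPolynomial.finSuccEquiv ℚ n p).map
        (MvPolynomial.aeval y : MvPolynomial (Fin n) ℚ →ₐ[ℚ] K).toRingHom).eval θ := by
  induction p using MvPolynomial.induction_on with
  | C a => simp [MvPolynomial.finSuccEquiv_apply]
  | add p q hp hq => simp [hp, hq]
  | mul_X p i hp =>
    rw [map_mul, map_mul, hp]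
    refine Fin.cases ?_ (fun i => ?_) i <;>
    simp [MvPolynomial.finSuccEquiv_X_zero, MvPolynomial.finSuccEquiv_X_succ]

noncomputable abbrev evP {n : ℕ} {K : Type*} [Field K] [Algebra ℚ K] (y : Fin n → K)
    (f : Polynomial (MvPolynomial (Fin n) ℚ)) : Polynomial K :=
  f.map (MvPolynomial.aeval y : MvPolynomial (Fin n) ℚ →ₐ[ℚ] K).toRingHom

lemma evP_coe {n : ℕ} (z : Fin n → RealAlg) (f : Polynomial (MvPolynomial (Fin n) ℚ)) :
    evP (fun i => (z i : ℝ)) f = (evP z f).map (algebraMap RealAlg ℝ) := by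
  rw [evP, evP, Polynomial.map_map]
  congr 1
  ext i
  · simp
  · simp

lemma evP_zero {n : ℕ} {y : Fin n → ℝ} {z : Fin n → RealAlg} (h : SpecPt y z)
    {f : Polynomial (MvPolynomial (Fin n) ℚ)} (hf : evP y f = 0) : evP z f = 0 := by
  ext i
  have := congrArg (fun q => q.coeff i) hf
  simp only [evP, Polynomial.coeff_map, Polynomial.coeff_zero] at this ⊢
  rw [show (MvPolynomial.aeval z : MvPolynomial (Fin n) ℚ →ₐ[ℚ] RealAlg).toRingHom (f.coeff i) = 0
    from h _ this]

lemma continuous_evP {n : ℕ} (f : Polynomial (MvPolynomial (Fin n) ℚ)) (a : ℝ) :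
    Continuous fun y : Fin n → ℝ => (evP y f).eval a := by
  have : (fun y : Fin n → ℝ => (evP y f).eval a) = fun y : Fin n → ℝ =>
      ∑ i ∈ Finset.range (f.natDegree + 1), MvPolynomial.aeval y (f.coeff i) * a ^ i := by
    ext y
    rw [Polynomial.eval_map, Polynomial.eval₂_eq_sum_range]
    rfl
  rw [this]
  refine continuous_finsetSum _ fun i _ => ?_
  refine Continuous.mul ?_ continuous_const
  simp only [MvPolynomial.aeval_def, ← MvPolynomial.eval_map]
  exact MvPolynomial.continuous_eval _

lemma continuous_aevalR {n : ℕ} (p : MvPolynomial (Fin n) ℚ) :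
    Continuous fun y : Fin n → ℝ => MvPolynomial.aeval y p := by
  simp only [MvPolynomial.aeval_def, ← MvPolynomial.eval_map]
  exact MvPolynomial.continuous_eval _

theorem density : ∀ {N : ℕ} (x : Fin N → ℝ),
    ∃ᶠ y in nhds x, ∃ z : Fin N → RealAlg, (y = fun i => (z i : ℝ)) ∧ SpecPt x z := by
  intro N
  induction N with
  | zero =>
    intro x
    refine Filter.Eventually.frequently (Filter.Eventually.of_forall fun y => ?_)
    refine ⟨fun i => i.elim0, Subsingleton.elim _ _, fun p hp => ?_⟩
    have hx : x = fun i => algebraMap RealAlg ℝ ((fun i => i.elim0 : Fin 0 → RealAlg) i) :=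
      Subsingleton.elim _ _
    rw [hx] at hp
    have := MvPolynomial.aeval_algebraMap_apply (B := ℝ) (fun i => i.elim0 : Fin 0 → RealAlg) p
    erw [this] at hp
    exact (map_eq_zero _).mp hp
  | succ n ih =>
    intro x
    obtain ⟨θ, y, rfl⟩ : ∃ θ y, x = Fin.cons θ y := ⟨x 0, Fin.tail x, (Fin.cons_self_tail x).symm⟩
    have ih := ih y
    rw [Metric.nhds_basis_ball.frequently_iff]
    intro ε hε
    -- reduce
    suffices H : ∃ (z : Fin n → RealAlg) (η : RealAlg), SpecPt y z ∧
        dist (fun i => (z i : ℝ)) y < ε ∧ dist (η : ℝ) θ < ε ∧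
        ∀ f, (evP y f).eval θ = 0 → (evP z f).eval η = 0 by
      obtain ⟨z, η, hs, hd, hd', hf⟩ := H
      refine ⟨_, ?_, Fin.cons η z, rfl, ?_⟩
      · rw [Metric.mem_ball, dist_pi_lt_iff hε]
        refine Fin.cases ?_ fun i => ?_
        · simpa using hd'
        · simpa using (dist_pi_lt_iff hε).mp hd i
      · intro p hp
        rw [aeval_cons] at hp ⊢
        exact hf _ hp
    by_cases hall : ∀ f, (evP y f).eval θ = 0 → evP y f = 0
    · obtain ⟨y', ⟨z, rfl, hz⟩, hy'⟩ := (ih.and_eventually (Metric.ball_mem_nhds y hε)).exists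
      obtain ⟨q, hq1, hq2⟩ := exists_rat_btwn (show θ < θ + ε by linarith)
      refine ⟨z, (q : RealAlg), hz, hy', ?_, fun f hf => ?_⟩
      · have : ((q : RealAlg) : ℝ) = q := by simp
        rw [this, Real.dist_eq, abs_lt]
        constructor <;> linarith
      · rw [evP_zero hz (hall f hf)]; simp
    · push Not at hall
      classical
      have hex : ∃ d : ℕ, ∃ f, f.natDegree = d ∧ (evP y f).eval θ = 0 ∧ evP y f ≠ 0 := by
        obtain ⟨f, h1, h2⟩ := hall
        exact ⟨_, f, rfl, h1, h2⟩
      obtain ⟨f, hfd, hf0, hf1⟩ := Nat.find_spec hex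
      have hmin : ∀ g, g.natDegree < f.natDegree → (evP y g).eval θ = 0 → evP y g = 0 := by
        intro g hg hg0
        by_contra hg1
        exact Nat.find_min hex (hfd ▸ hg) ⟨g, rfl, hg0, hg1⟩
      have hfpos : 0 < f.natDegree := by
        by_contra hcon
        have h0 : f.natDegree = 0 := by omega
        obtain ⟨c, hc⟩ := Polynomial.natDegree_eq_zero.mp h0
        subst hc
        simp only [evP, Polynomial.map_C, Polynomial.eval_C] at hf0 hf1
        rw [hf0] at hf1
        simp at hf1
      have hlead : MvPolynomial.aeval y f.leadingCoeff ≠ 0 := by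
        intro hl
        have he : evP y f.eraseLead = evP y f := by
          conv_rhs => rw [← f.eraseLead_add_C_mul_X_pow]
          rw [evP, evP, Polynomial.map_add, Polynomial.map_mul, Polynomial.map_C]
          rw [show (MvPolynomial.aeval y : MvPolynomial (Fin n) ℚ →ₐ[ℚ] ℝ).toRingHom f.leadingCoeff
            = 0 from hl]
          simp
        have hd : f.eraseLead.natDegree < f.natDegree := by
          have := f.eraseLead_natDegree_le
          omega
        exact hf1 (he ▸ hmin _ hd (he ▸ hf0))
      have hder : ((evP y f).derivative).eval θ ≠ 0 := by
        intro h0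
        rw [evP, Polynomial.derivative_map] at h0
        have h1 := hmin _ (Polynomial.natDegree_derivative_lt hfpos.ne') h0
        rw [evP, ← Polynomial.derivative_map] at h1
        have h2 := Polynomial.derivative_eq_zero.mp h1
        obtain ⟨c, hc⟩ := Polynomial.natDegree_eq_zero.mp h2
        have hf0' := hf0
        rw [evP, ← hc, Polynomial.eval_C] at hf0'
        apply hf1
        rw [evP, ← hc, hf0', Polynomial.C_0]
      obtain ⟨a, b, ha, hab, hb, hsg⟩ := sign_change _ θ ε hε hf0 hder
      have e1 : ∀ᶠ y' in nhds y, (evP y' f).eval a * (evP y' f).eval b < 0 :=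
        ((continuous_evP f a).mul (continuous_evP f b)).continuousAt.eventually (gt_mem_nhds hsg)
      have e2 : ∀ᶠ y' in nhds y, MvPolynomial.aeval y' f.leadingCoeff ≠ 0 :=
        (continuous_aevalR f.leadingCoeff).continuousAt.eventually_ne hlead
      obtain ⟨y', ⟨z, rfl, hz⟩, hy', he1, he2⟩ :=
        (ih.and_eventually ((Filter.eventually_mem_set.mpr (Metric.ball_mem_nhds y hε)).and
          (e1.and e2))).exists
      obtain ⟨c, hc1, hc2, hc0⟩ := ivt_poly _ a b hab he1
      have hne : evP z f ≠ 0 := by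
        intro h0
        rw [evP_coe, h0] at he1
        simp at he1
      have hcalg : c ∈ algebraicClosure ℚ ℝ := by
        rw [mem_algebraicClosure_iff]
        have hca : IsAlgebraic RealAlg c := by
          refine ⟨evP z f, hne, ?_⟩
          rw [Polynomial.aeval_def, ← Polynomial.eval_map, ← evP_coe]
          exact hc0
        haveI : Algebra.IsAlgebraic ℚ RealAlg := algebraicClosure.isAlgebraic ℚ ℝ
        exact hca.restrictScalars ℚ
      have hroot : (evP z f).eval (⟨c, hcalg⟩ : RealAlg) = 0 := by
        rw [evP_coe] at hc0
        apply (algebraMap RealAlg ℝ).injective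
        rw [← Polynomial.eval_map_apply, map_zero]
        exact hc0
      have hlz : MvPolynomial.aeval z f.leadingCoeff ≠ 0 := by
        intro h0
        apply he2
        have := MvPolynomial.aeval_algebraMap_apply (B := ℝ) z f.leadingCoeff
        rw [h0, map_zero] at this
        exact this
      refine ⟨z, ⟨c, hcalg⟩, hz, hy', ?_, ?_⟩
      · rw [Real.dist_eq, abs_lt]
        constructor <;> simp only <;> linarith
      · have main : ∀ d : ℕ, ∀ g, g.natDegree = d → (evP y g).eval θ = 0 →
            (evP z g).eval (⟨c, hcalg⟩ : RealAlg) = 0 := by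
          intro d
          induction d using Nat.strong_induction_on with
          | _ d IH =>
            intro g hg hg0
            by_cases hlt : g.natDegree < f.natDegree
            · rw [evP_zero hz (hmin g hlt hg0)]; simp
            · push Not at hlt
              have h1 := Polynomial.natDegree_cancelLeads_lt_of_natDegree_le_natDegree hlt
                (by omega)
              have h2 := IH _ (hg ▸ h1) (f.cancelLeads g) rfl (by
                simp only [evP] at hg0 hf0
                simp only [Polynomial.cancelLeads, evP, Polynomial.map_sub, Polynomial.map_mul,
                  Polynomial.eval_sub, Polynomial.eval_mul, hg0, hf0, mul_zero, sub_zero])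
              have hroot' := hroot
              simp only [evP] at hroot'
              simp only [Polynomial.cancelLeads, evP, Polynomial.map_sub, Polynomial.map_mul,
                Polynomial.eval_sub, Polynomial.eval_mul, hroot', mul_zero, sub_zero,
                Nat.sub_eq_zero_of_le hlt, pow_zero, Polynomial.map_one, Polynomial.eval_one,
                mul_one, Polynomial.map_C, Polynomial.eval_C] at h2
              exact (mul_eq_zero.mp h2).resolve_left hlz
        exact fun g => main _ g rfl

theorem exists_hom (S : Set ℝ) (hS : S.Finite) (a : ℝ) (ha : a ≠ 0) :
    ∃ A : Subalgebra ℚ ℝ, S ⊆ A ∧ ∃ (haA : a ∈ A) (φ : A →ₐ[ℚ] RealAlg), φ ⟨a, haA⟩ ≠ 0 := by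
  have hfin := hS.insert a
  haveI : Fintype ↑(insert a S) := hfin.fintype
  let e := Fintype.equivFin ↑(insert a S)
  let x : Fin (Fintype.card ↑(insert a S)) → ℝ := fun i => (e.symm i : ℝ)
  let f : MvPolynomial (Fin (Fintype.card ↑(insert a S))) ℚ →ₐ[ℚ] ℝ := MvPolynomial.aeval x
  have hmem : ∀ s ∈ insert a S, s ∈ f.range := by
    intro s hs
    refine ⟨MvPolynomial.X (e ⟨s, hs⟩), ?_⟩
    simp [f, x]
  obtain ⟨q, hq⟩ := hmem a (Set.mem_insert _ _)
  have hq' : f q = a := hq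
  have hev : ∀ᶠ y in nhds x, MvPolynomial.aeval y q ≠ 0 :=
    (continuous_aevalR q).continuousAt.eventually_ne (by
      have : MvPolynomial.aeval x q = a := hq'
      rw [this]; exact ha)
  obtain ⟨y, ⟨z, rfl, hz⟩, hne⟩ := ((density x).and_eventually hev).exists
  refine ⟨f.range, fun s hs => hmem s (Set.mem_insert_of_mem _ hs), ⟨q, hq⟩, 
    (Ideal.Quotient.liftₐ (RingHom.ker f) (MvPolynomial.aeval z) (fun p hp => hz p hp)).comp
      (Ideal.quotientKerEquivRange f).symm.toAlgHom, ?_⟩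
  have h1 : (Ideal.quotientKerEquivRange f).symm ⟨a, ⟨q, hq⟩⟩ = Ideal.Quotient.mk _ q := by
    rw [AlgEquiv.symm_apply_eq]
    ext
    exact hq'.symm
  intro h0
  simp only [AlgHom.comp_apply] at h0
  erw [h1] at h0
  have h2 : MvPolynomial.aeval z q = 0 := h0
  apply hne
  have := MvPolynomial.aeval_algebraMap_apply (B := ℝ) z q
  rw [h2, map_zero] at this
  exact this

section keypart
open Matrix

def fx {F : Type*} [Field F] {m : ℕ} (P : Matrix (Fin m) (Fin m) F) :
    Submodule F (Fin m → F) where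
  carrier := {y | P *ᵥ y = y}
  add_mem' := by
    intro a b ha hb
    simp only [Set.mem_setOf_eq] at *
    rw [mulVec_add, ha, hb]
  zero_mem' := by simp
  smul_mem' := by
    intro c a ha
    simp only [Set.mem_setOf_eq] at *
    rw [mulVec_smul, ha]

lemma mem_fx {F : Type*} [Field F] {m : ℕ} {P : Matrix (Fin m) (Fin m) F} {y : Fin m → F} :
    y ∈ fx P ↔ P *ᵥ y = y := Iff.rfl

lemma orthF_fx {F : Type*} [Field F] {m : ℕ} {P : Matrix (Fin m) (Fin m) F}
    (hs : P.IsSymm) (hi : P * P = P) : orthF (fx P) = fx (1 - P) := by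
  have hadj : ∀ x y : Fin m → F, (P *ᵥ x) ⬝ᵥ y = x ⬝ᵥ (P *ᵥ y) := by
    intro x y
    rw [dotProduct_mulVec, ← mulVec_transpose, hs.eq]
  ext y
  rw [mem_fx, sub_mulVec, one_mulVec, sub_eq_self]
  constructor
  · intro h
    have h' : ∀ x ∈ fx P, x ⬝ᵥ y = 0 := h
    apply dotProduct_eq_zero
    intro w
    rw [dotProduct_comm, ← hadj]
    apply h'
    rw [mem_fx, mulVec_mulVec, hi]
  · intro h
    show ∀ x ∈ fx P, x ⬝ᵥ y = 0
    intro x hx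
    rw [mem_fx] at hx
    rw [← hx, hadj, h, dotProduct_zero]

lemma fx_sup {F : Type*} [Field F] {m : ℕ} {P₁ P₂ Q X Y : Matrix (Fin m) (Fin m) F}
    (h1 : P₁ * P₁ = P₁) (h2 : P₂ * P₂ = P₂) (hq1 : Q * P₁ = P₁) (hq2 : Q * P₂ = P₂)
    (hQ : Q = P₁ * X + P₂ * Y) : fx P₁ ⊔ fx P₂ = fx Q := by
  apply le_antisymm
  · apply sup_le
    · intro y hy
      rw [mem_fx] at hy ⊢
      rw [← hy, mulVec_mulVec, hq1]
    · intro y hy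
      rw [mem_fx] at hy ⊢
      rw [← hy, mulVec_mulVec, hq2]
  · intro y hy
    rw [mem_fx] at hy
    rw [← hy, hQ, add_mulVec]
    apply Submodule.add_mem_sup
    · rw [mem_fx, mulVec_mulVec, ← mul_assoc, h1]
    · rw [mem_fx, mulVec_mulVec, ← mul_assoc, h2]

lemma fx_inf {F : Type*} [Field F] {m : ℕ} {P₁ P₂ Q X Y : Matrix (Fin m) (Fin m) F}
    (hq1 : P₁ * Q = Q) (hq2 : P₂ * Q = Q)
    (hQ : 1 - Q = X * (1 - P₁) + Y * (1 - P₂)) : fx P₁ ⊓ fx P₂ = fx Q := by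
  ext y
  rw [Submodule.mem_inf]
  simp only [mem_fx]
  constructor
  · rintro ⟨h1, h2⟩
    have : (1 - Q) *ᵥ y = 0 := by
      rw [hQ, add_mulVec, ← mulVec_mulVec, ← mulVec_mulVec, sub_mulVec, sub_mulVec, one_mulVec,
        h1, h2]
      simp
    rw [sub_mulVec, one_mulVec, sub_eq_zero] at this
    exact this.symm
  · intro h
    constructor
    · rw [← h, mulVec_mulVec, hq1]
    · rw [← h, mulVec_mulVec, hq2]

/-- columns -/
lemma mul_eq_of_le {F : Type*} [Field F] {m : ℕ} {P Q : Matrix (Fin m) (Fin m) F}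
    (hP : P * P = P) (h : fx P ≤ fx Q) : Q * P = P := by
  apply Matrix.ext_of_mulVec_single
  intro j
  rw [← mulVec_mulVec]
  apply h
  rw [mem_fx, mulVec_mulVec, hP]

lemma exists_sup {F : Type*} [Field F] {m : ℕ} {P₁ P₂ Q : Matrix (Fin m) (Fin m) F}
    (hQ : Q * Q = Q) (h : fx Q ≤ fx P₁ ⊔ fx P₂) : ∃ X Y, Q = P₁ * X + P₂ * Y := by
  have : ∀ j, ∃ a b : Fin m → F, Q *ᵥ Pi.single j 1 = P₁ *ᵥ a + P₂ *ᵥ b := by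
    intro j
    have hj : Q *ᵥ Pi.single j 1 ∈ fx Q := by rw [mem_fx, mulVec_mulVec, hQ]
    obtain ⟨a, ha, b, hb, hab⟩ := Submodule.mem_sup.mp (h hj)
    refine ⟨a, b, ?_⟩
    rw [mem_fx] at ha hb
    rw [← hab, ha, hb]
  choose a b hab using this
  refine ⟨(Matrix.of a)ᵀ, (Matrix.of b)ᵀ, ?_⟩
  ext i j
  have := congrFun (hab j) i
  rw [mulVec_single_one] at this
  simpa [mulVec, dotProduct, Matrix.mul_apply] using this

lemma exists_inf {F : Type*} [Field F] {m : ℕ} {P₁ P₂ Q : Matrix (Fin m) (Fin m) F}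
    (h : fx P₁ ⊓ fx P₂ ≤ fx Q) : ∃ X Y, 1 - Q = X * (1 - P₁) + Y * (1 - P₂) := by
  let T : (Fin m → F) →ₗ[F] (Fin m → F) × (Fin m → F) :=
    (Matrix.toLin' (1 - P₁)).prod (Matrix.toLin' (1 - P₂))
  let g := Matrix.toLin' (1 - Q)
  have hk : LinearMap.ker T ≤ LinearMap.ker g := by
    intro y hy
    simp only [T, g, LinearMap.mem_ker, LinearMap.prod_apply, Function.prod_apply, Prod.mk_eq_zero,
      Matrix.toLin'_apply, sub_mulVec, one_mulVec, sub_eq_zero] at hy ⊢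
    exact (h ⟨hy.1.symm, hy.2.symm⟩ : _ = _).symm
  obtain ⟨L, hL⟩ : ∃ L : (Fin m → F) × (Fin m → F) →ₗ[F] (Fin m → F), L ∘ₗ T = g := by
    let T' := (LinearMap.ker T).liftQ T le_rfl
    have hT' : LinearMap.ker T' = ⊥ := Submodule.ker_liftQ_eq_bot _ _ _ le_rfl
    obtain ⟨R, hR⟩ := T'.exists_leftInverse_of_injective hT'
    refine ⟨(LinearMap.ker T).liftQ g hk ∘ₗ R, ?_⟩
    refine LinearMap.ext fun y => ?_
    have := LinearMap.congr_fun hR (Submodule.Quotient.mk y)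
    simp only [LinearMap.comp_apply, T', Submodule.liftQ_apply, LinearMap.id_apply] at this
    simp only [LinearMap.comp_apply, this, Submodule.liftQ_apply]
  refine ⟨LinearMap.toMatrix' (L ∘ₗ LinearMap.inl F _ _), LinearMap.toMatrix' (L ∘ₗ LinearMap.inr F _ _), ?_⟩
  apply Matrix.toLin'.injective
  rw [map_add, Matrix.toLin'_mul, Matrix.toLin'_mul, Matrix.toLin'_toMatrix', Matrix.toLin'_toMatrix']
  change g = _
  rw [← hL]
  refine LinearMap.ext fun y => ?_
  simp only [LinearMap.comp_apply, LinearMap.add_apply, ← map_add]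
  simp [T]

lemma exists_proj {m : ℕ} (U : Submodule ℝ (Fin m → ℝ)) :
    ∃ P : Matrix (Fin m) (Fin m) ℝ, P.IsSymm ∧ P * P = P ∧ fx P = U := by
  let e := (WithLp.linearEquiv 2 ℝ (Fin m → ℝ))
  let W : Submodule ℝ (EuclideanSpace ℝ (Fin m)) := U.comap e.toLinearMap
  let p : (Fin m → ℝ) →ₗ[ℝ] (Fin m → ℝ) :=
    e.toLinearMap ∘ₗ W.starProjection.toLinearMap ∘ₗ e.symm.toLinearMap
  have hp : ∀ x, p x = e (W.starProjection (e.symm x)) := fun x => rfl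
  have hmv : ∀ x, LinearMap.toMatrix' p *ᵥ x = p x := fun x => LinearMap.toMatrix'_mulVec p x
  have hfix : ∀ x, p x = x ↔ x ∈ U := by
    intro x
    rw [hp, ← LinearEquiv.eq_symm_apply, Submodule.starProjection_eq_self_iff]
    simp [W]
  refine ⟨LinearMap.toMatrix' p, ?_, ?_, ?_⟩
  · have hadj : ∀ x y : EuclideanSpace ℝ (Fin m),
        inner ℝ (W.starProjection x) y = inner ℝ x (W.starProjection y) :=
      Submodule.inner_starProjection_left_eq_right W
    ext i j
    have := hadj (EuclideanSpace.single i 1) (EuclideanSpace.single j 1)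
    rw [EuclideanSpace.inner_single_left, EuclideanSpace.inner_single_right] at this
    simp only [Matrix.transpose_apply, LinearMap.toMatrix'_apply, hp]
    simpa [e] using this
  · apply Matrix.toLin'.injective
    rw [Matrix.toLin'_mul, Matrix.toLin'_toMatrix']
    refine LinearMap.ext fun x => ?_
    rw [LinearMap.comp_apply, hfix, hp]
    have : W.starProjection (e.symm x) ∈ W := Submodule.starProjection_apply_mem _ _
    exact this
  · ext x
    rw [mem_fx, hmv, hfix]

noncomputable def pm {m : ℕ} (U : Submodule ℝ (Fin m → ℝ)) : Matrix (Fin m) (Fin m) ℝ :=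
  (exists_proj U).choose

def ent {m : ℕ} (P : Matrix (Fin m) (Fin m) ℝ) : Set ℝ := Set.range fun p : Fin m × Fin m => P p.1 p.2

lemma ent_finite {m : ℕ} (P : Matrix (Fin m) (Fin m) ℝ) : (ent P).Finite := Set.finite_range _

/-- A `ψ` representing a homomorphism on `A`. -/
structure HomOn {F : Type*} [Field F] (A : Subalgebra ℚ ℝ) (ψ : ℝ → F) : Prop where
  one : ψ 1 = 1
  zero : ψ 0 = 0
  add : ∀ a ∈ A, ∀ b ∈ A, ψ (a + b) = ψ a + ψ b
  mul : ∀ a ∈ A, ∀ b ∈ A, ψ (a * b) = ψ a * ψ b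

namespace HomOn
variable {F : Type*} [Field F] {A : Subalgebra ℚ ℝ} {ψ : ℝ → F} {m : ℕ}
  {P Q : Matrix (Fin m) (Fin m) ℝ}

lemma sub (h : HomOn A ψ) (a : ℝ) (ha : a ∈ A) (b : ℝ) (hb : b ∈ A) : ψ (a - b) = ψ a - ψ b := by
  have := h.add (a - b) (A.sub_mem ha hb) b hb
  rw [sub_add_cancel] at this
  rw [this, add_sub_cancel_right]

lemma sum (h : HomOn A ψ) {ι : Type*} (s : Finset ι) (f : ι → ℝ) (hf : ∀ i, f i ∈ A) :
    ψ (∑ i ∈ s, f i) = ∑ i ∈ s, ψ (f i) := by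
  classical
  induction s using Finset.induction_on with
  | empty => simp [h.zero]
  | insert a s ha ih =>
    rw [Finset.sum_insert ha, Finset.sum_insert ha, h.add _ (hf a) _ (A.sum_mem fun i _ => hf i), ih]

lemma mapMul (h : HomOn A ψ) (hP : ent P ⊆ A) (hQ : ent Q ⊆ A) :
    (P * Q).map ψ = P.map ψ * Q.map ψ := by
  ext i j
  have hP' : ∀ i j, P i j ∈ A := fun i j => hP ⟨(i, j), rfl⟩
  have hQ' : ∀ i j, Q i j ∈ A := fun i j => hQ ⟨(i, j), rfl⟩
  simp only [Matrix.map_apply, Matrix.mul_apply]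
  rw [h.sum _ _ fun k => A.mul_mem (hP' _ _) (hQ' _ _)]
  exact Finset.sum_congr rfl fun k _ => h.mul _ (hP' _ _) _ (hQ' _ _)

lemma mapAdd (h : HomOn A ψ) (hP : ent P ⊆ A) (hQ : ent Q ⊆ A) :
    (P + Q).map ψ = P.map ψ + Q.map ψ := by
  ext i j
  exact h.add _ (hP ⟨(i, j), rfl⟩) _ (hQ ⟨(i, j), rfl⟩)

lemma mapSub (h : HomOn A ψ) (hP : ent P ⊆ A) (hQ : ent Q ⊆ A) :
    (P - Q).map ψ = P.map ψ - Q.map ψ := by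
  ext i j
  exact h.sub _ (hP ⟨(i, j), rfl⟩) _ (hQ ⟨(i, j), rfl⟩)

lemma mapOne (h : HomOn A ψ) : (1 : Matrix (Fin m) (Fin m) ℝ).map ψ = 1 :=
  Matrix.map_one ψ h.zero h.one

end HomOn

lemma ent_one {m : ℕ} (A : Subalgebra ℚ ℝ) : ent (1 : Matrix (Fin m) (Fin m) ℝ) ⊆ A := by
  rintro _ ⟨⟨i, j⟩, rfl⟩
  simp only [Matrix.one_apply]
  split_ifs
  · exact A.one_mem
  · exact A.zero_mem

lemma ent_mul {m : ℕ} {A : Subalgebra ℚ ℝ} {P Q : Matrix (Fin m) (Fin m) ℝ}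
    (hP : ent P ⊆ A) (hQ : ent Q ⊆ A) : ent (P * Q) ⊆ A := by
  rintro _ ⟨⟨i, j⟩, rfl⟩
  simp only [Matrix.mul_apply]
  exact A.sum_mem fun k _ => A.mul_mem (hP ⟨(_, _), rfl⟩) (hQ ⟨(_, _), rfl⟩)

lemma ent_sub {m : ℕ} {A : Subalgebra ℚ ℝ} {P Q : Matrix (Fin m) (Fin m) ℝ}
    (hP : ent P ⊆ A) (hQ : ent Q ⊆ A) : ent (P - Q) ⊆ A := by
  rintro _ ⟨⟨i, j⟩, rfl⟩
  exact A.sub_mem (hP ⟨(_, _), rfl⟩) (hQ ⟨(_, _), rfl⟩)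

theorem key (F : Type*) [Field F] {m : ℕ} (v : ℕ → Submodule ℝ (Fin m → ℝ)) (t : OLTerm) :
    ∃ (P : Matrix (Fin m) (Fin m) ℝ) (S : Set ℝ), S.Finite ∧ P.IsSymm ∧ P * P = P ∧
      fx P = t.evalF v ∧ ∀ A : Subalgebra ℚ ℝ, S ⊆ A → ent P ⊆ A ∧
        ∀ ψ : ℝ → F, HomOn A ψ →
          t.evalF (fun i => fx ((pm (v i)).map ψ)) = fx (P.map ψ) := by
  induction t with
  | var i =>
    obtain ⟨h1, h2, h3⟩ := (exists_proj (v i)).choose_spec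
    exact ⟨pm (v i), ent (pm (v i)), ent_finite _, h1, h2, h3, fun A hA => ⟨hA, fun ψ hψ => rfl⟩⟩
  | zero =>
    refine ⟨0, ∅, Set.finite_empty, Matrix.isSymm_zero, by simp, ?_, fun A _ => ⟨?_, ?_⟩⟩
    · ext y
      simp only [mem_fx, zero_mulVec, OLTerm.evalF, Submodule.mem_bot, eq_comm]
    · rintro _ ⟨⟨i, j⟩, rfl⟩
      exact A.zero_mem
    · intro ψ hψ
      ext y
      rw [Matrix.map_zero _ hψ.zero]
      simp only [mem_fx, zero_mulVec, OLTerm.evalF, Submodule.mem_bot, eq_comm]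
  | one =>
    refine ⟨1, ∅, Set.finite_empty, Matrix.isSymm_one, by simp, ?_, fun A _ => ⟨ent_one A, ?_⟩⟩
    · ext y
      simp [mem_fx, OLTerm.evalF]
    · intro ψ hψ
      ext y
      rw [hψ.mapOne]
      simp [mem_fx, OLTerm.evalF]
  | inf t s iht ihs =>
    obtain ⟨P₁, S₁, hS₁, hs₁, hi₁, hf₁, hA₁⟩ := iht
    obtain ⟨P₂, S₂, hS₂, hs₂, hi₂, hf₂, hA₂⟩ := ihs
    obtain ⟨Q, hs, hi, hf⟩ := exists_proj (fx P₁ ⊓ fx P₂)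
    obtain ⟨X, Y, hXY⟩ := exists_inf hf.ge
    have hq1 : P₁ * Q = Q := mul_eq_of_le hi (hf.le.trans inf_le_left)
    have hq2 : P₂ * Q = Q := mul_eq_of_le hi (hf.le.trans inf_le_right)
    refine ⟨Q, S₁ ∪ S₂ ∪ (ent Q ∪ ent X ∪ ent Y),
      (hS₁.union hS₂).union (((ent_finite _).union (ent_finite _)).union (ent_finite _)),
      hs, hi, by rw [hf, hf₁, hf₂]; rfl, fun A hA => ?_⟩
    simp only [Set.union_subset_iff] at hA
    obtain ⟨⟨a1, a2⟩, ⟨aQ, aX⟩, aY⟩ := hA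
    obtain ⟨e1, b1⟩ := hA₁ A a1
    obtain ⟨e2, b2⟩ := hA₂ A a2
    refine ⟨aQ, fun ψ hψ => ?_⟩
    show t.evalF _ ⊓ s.evalF _ = _
    rw [b1 ψ hψ, b2 ψ hψ]
    have o := ent_one (m := m) A
    apply fx_inf (X := X.map ψ) (Y := Y.map ψ)
    · rw [← hψ.mapMul e1 aQ, hq1]
    · rw [← hψ.mapMul e2 aQ, hq2]
    · rw [← hψ.mapOne, ← hψ.mapSub o aQ, ← hψ.mapSub o e1, ← hψ.mapSub o e2,
        ← hψ.mapMul aX (ent_sub o e1), ← hψ.mapMul aY (ent_sub o e2),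
        ← hψ.mapAdd (ent_mul aX (ent_sub o e1)) (ent_mul aY (ent_sub o e2)), hXY]
  | sup t s iht ihs =>
    obtain ⟨P₁, S₁, hS₁, hs₁, hi₁, hf₁, hA₁⟩ := iht
    obtain ⟨P₂, S₂, hS₂, hs₂, hi₂, hf₂, hA₂⟩ := ihs
    obtain ⟨Q, hs, hi, hf⟩ := exists_proj (fx P₁ ⊔ fx P₂)
    obtain ⟨X, Y, hXY⟩ := exists_sup hi hf.le
    have hq1 : Q * P₁ = P₁ := mul_eq_of_le hi₁ (le_sup_left.trans hf.ge)
    have hq2 : Q * P₂ = P₂ := mul_eq_of_le hi₂ (le_sup_right.trans hf.ge)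
    refine ⟨Q, S₁ ∪ S₂ ∪ (ent Q ∪ ent X ∪ ent Y),
      (hS₁.union hS₂).union (((ent_finite _).union (ent_finite _)).union (ent_finite _)),
      hs, hi, by rw [hf, hf₁, hf₂]; rfl, fun A hA => ?_⟩
    simp only [Set.union_subset_iff] at hA
    obtain ⟨⟨a1, a2⟩, ⟨aQ, aX⟩, aY⟩ := hA
    obtain ⟨e1, b1⟩ := hA₁ A a1
    obtain ⟨e2, b2⟩ := hA₂ A a2
    refine ⟨aQ, fun ψ hψ => ?_⟩
    show t.evalF _ ⊔ s.evalF _ = _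
    rw [b1 ψ hψ, b2 ψ hψ]
    apply fx_sup (X := X.map ψ) (Y := Y.map ψ)
    · rw [← hψ.mapMul e1 e1, hi₁]
    · rw [← hψ.mapMul e2 e2, hi₂]
    · rw [← hψ.mapMul aQ e1, hq1]
    · rw [← hψ.mapMul aQ e2, hq2]
    · rw [← hψ.mapMul e1 aX, ← hψ.mapMul e2 aY, ← hψ.mapAdd (ent_mul e1 aX) (ent_mul e2 aY), ← hXY]
  | compl t iht =>
    obtain ⟨P, S, hS, hs, hi, hf, hA⟩ := iht
    refine ⟨1 - P, S, hS, ?_, ?_, ?_, fun A hSA => ?_⟩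
    · exact Matrix.isSymm_one.sub hs
    · rw [mul_sub, sub_mul, sub_mul, hi]; simp
    · rw [← orthF_fx hs hi, hf]; rfl
    · obtain ⟨e, b⟩ := hA A hSA
      refine ⟨ent_sub (ent_one A) e, fun ψ hψ => ?_⟩
      show orthF (t.evalF _) = _
      rw [b ψ hψ, hψ.mapSub (ent_one A) e, hψ.mapOne]
      apply orthF_fx
      · rw [Matrix.IsSymm, ← Matrix.transpose_map, hs.eq]
      · rw [← hψ.mapMul e e, hi]

theorem transfer (t : OLTerm) (m : ℕ)
    (h : ∀ v : ℕ → Submodule RealAlg (Fin m → RealAlg), t.evalF v = ⊤)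
    (v : ℕ → Submodule ℝ (Fin m → ℝ)) : t.evalF v = ⊤ := by
  classical
  obtain ⟨P, S, hS, hs, hi, hf, hA⟩ := key RealAlg v t
  have hP : P = 1 := by
    by_contra hne
    obtain ⟨i, j, hij⟩ : ∃ i j, P i j - (1 : Matrix (Fin m) (Fin m) ℝ) i j ≠ 0 := by
      by_contra hcon
      push Not at hcon
      exact hne (Matrix.ext fun i j => sub_eq_zero.mp (hcon i j))
    obtain ⟨A, hSA, haA, φ, hφ⟩ := exists_hom S hS _ hij
    obtain ⟨e, b⟩ := hA A hSA
    let ψ : ℝ → RealAlg := fun r => if hr : r ∈ A then φ ⟨r, hr⟩ else 0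
    have hψe : ∀ (r) (hr : r ∈ A), ψ r = φ ⟨r, hr⟩ := fun r hr => dif_pos hr
    have hψ : HomOn A ψ := by
      constructor
      · rw [hψe 1 A.one_mem]; exact map_one φ
      · rw [hψe 0 A.zero_mem]; exact map_zero φ
      · intro a ha c hc
        rw [hψe a ha, hψe c hc, hψe _ (A.add_mem ha hc), ← map_add]; rfl
      · intro a ha c hc
        rw [hψe a ha, hψe c hc, hψe _ (A.mul_mem ha hc), ← map_mul]; rfl
    have htop := (b ψ hψ).symm.trans (h _)
    have h1 : P.map ψ = 1 := by
      apply Matrix.ext_of_mulVec_single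
      intro k
      rw [one_mulVec]
      have : (Pi.single k 1 : Fin m → RealAlg) ∈ fx (P.map ψ) := by rw [htop]; trivial
      exact this
    apply hφ
    rw [← hψe _ haA, hψ.sub _ (e ⟨(i, j), rfl⟩) _ (ent_one A ⟨(i, j), rfl⟩), sub_eq_zero]
    have h2 := congrFun (congrFun (h1.trans hψ.mapOne.symm) i) j
    exact h2
  rw [← hf, hP]
  ext y
  simp [mem_fx]

end keypart

section complexpart

/-- The (real-linear) coordinate map to `ℂ^k`. -/
noncomputable def JJ {m k r : ℕ} (e : Fin m ≃ (Fin k ⊕ Fin k) ⊕ Fin r) (x : Fin m → ℝ) :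
    EuclideanSpace ℂ (Fin k) :=
  WithLp.toLp 2 fun j => ⟨x (e.symm (.inl (.inl j))), x (e.symm (.inl (.inr j)))⟩

def KK {m k r : ℕ} (e : Fin m ≃ (Fin k ⊕ Fin k) ⊕ Fin r) (x : Fin m → ℝ) : Fin r → ℝ :=
  fun j => x (e.symm (.inr j))

noncomputable def LL {m k r : ℕ} (e : Fin m ≃ (Fin k ⊕ Fin k) ⊕ Fin r)
    (u : EuclideanSpace ℂ (Fin k)) (w : Fin r → ℝ) : Fin m → ℝ :=
  fun i => Sum.elim (Sum.elim (fun j => (u j).re) (fun j => (u j).im)) w (e i)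

variable {m k r : ℕ} (e : Fin m ≃ (Fin k ⊕ Fin k) ⊕ Fin r)

lemma JJ_LL (u : EuclideanSpace ℂ (Fin k)) (w : Fin r → ℝ) : JJ e (LL e u w) = u := by
  ext j
  simp [JJ, LL]

lemma KK_LL (u : EuclideanSpace ℂ (Fin k)) (w : Fin r → ℝ) : KK e (LL e u w) = w := by
  ext j
  simp [KK, LL]

lemma JJ_add (x y : Fin m → ℝ) : JJ e (x + y) = JJ e x + JJ e y := by
  ext j
  apply Complex.ext <;> simp [JJ]

lemma JJ_sub (x y : Fin m → ℝ) : JJ e (x - y) = JJ e x - JJ e y := by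
  ext j
  apply Complex.ext <;> simp [JJ]

lemma JJ_smul (c : ℝ) (x : Fin m → ℝ) : JJ e (c • x) = (c : ℂ) • JJ e x := by
  ext j
  apply Complex.ext <;> simp [JJ]

lemma JJ_zero : JJ e 0 = 0 := by
  ext j
  apply Complex.ext <;> simp [JJ]

lemma KK_add (x y : Fin m → ℝ) : KK e (x + y) = KK e x + KK e y := rfl
lemma KK_sub (x y : Fin m → ℝ) : KK e (x - y) = KK e x - KK e y := rfl

lemma JK_ext {x : Fin m → ℝ} (hJ : JJ e x = 0) (hK : KK e x = 0) : x = 0 := by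
  ext i
  obtain ⟨s, rfl⟩ := e.symm.surjective i
  rcases s with (j | j) | j
  · have := congrArg (fun u : EuclideanSpace ℂ (Fin k) => (u j).re) hJ
    simpa [JJ] using this
  · have := congrArg (fun u : EuclideanSpace ℂ (Fin k) => (u j).im) hJ
    simpa [JJ] using this
  · exact congrFun hK j

lemma dot_JK (x y : Fin m → ℝ) :
    ∑ i, x i * y i = (inner ℂ (JJ e x) (JJ e y)).re + ∑ j, KK e x j * KK e y j := by
  rw [← Equiv.sum_comp e.symm, Fintype.sum_sum_type, Fintype.sum_sum_type]
  congr 1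
  rw [PiLp.inner_apply, Complex.re_sum, ← Finset.sum_add_distrib]
  refine Finset.sum_congr rfl fun j _ => ?_
  simp [JJ]
  ring

def comapJ (U : Submodule ℂ (EuclideanSpace ℂ (Fin k))) : Submodule ℝ (Fin m → ℝ) where
  carrier := {x | JJ e x ∈ U}
  add_mem' := by
    intro a b ha hb
    simp only [Set.mem_setOf_eq] at *
    rw [JJ_add]; exact U.add_mem ha hb
  zero_mem' := by
    simp only [Set.mem_setOf_eq]
    rw [JJ_zero]; exact U.zero_mem
  smul_mem' := by
    intro c a ha
    simp only [Set.mem_setOf_eq] at *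
    rw [JJ_smul]; exact U.smul_mem _ ha

theorem complex_eval (v : ℕ → Submodule ℂ (EuclideanSpace ℂ (Fin k))) (t : OLTerm) :
    ∃ b : Prop, ∀ x : Fin m → ℝ, x ∈ t.evalF (fun i => comapJ e (v i)) ↔
      JJ e x ∈ t.evalSub v ∧ (b ∨ KK e x = 0) := by
  induction t with
  | var i => exact ⟨True, fun x => by simp [OLTerm.evalF, OLTerm.evalSub, comapJ]⟩
  | zero =>
    refine ⟨False, fun x => ?_⟩
    simp only [OLTerm.evalF, OLTerm.evalSub, Submodule.mem_bot, false_or]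
    constructor
    · rintro rfl
      exact ⟨JJ_zero e, rfl⟩
    · rintro ⟨h1, h2⟩
      exact JK_ext e h1 h2
  | one => exact ⟨True, fun x => by simp [OLTerm.evalF, OLTerm.evalSub]⟩
  | inf t s iht ihs =>
    obtain ⟨b, hb⟩ := iht
    obtain ⟨c, hc⟩ := ihs
    refine ⟨b ∧ c, fun x => ?_⟩
    simp only [OLTerm.evalF, OLTerm.evalSub, Submodule.mem_inf, hb, hc]
    tauto
  | sup t s iht ihs =>
    obtain ⟨b, hb⟩ := iht
    obtain ⟨c, hc⟩ := ihs
    refine ⟨b ∨ c, fun x => ?_⟩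
    simp only [OLTerm.evalF, OLTerm.evalSub, Submodule.mem_sup]
    constructor
    · rintro ⟨y, hy, z, hz, rfl⟩
      rw [hb] at hy
      rw [hc] at hz
      refine ⟨⟨_, hy.1, _, hz.1, (JJ_add e y z).symm⟩, ?_⟩
      rcases hy.2 with h | h
      · exact Or.inl (Or.inl h)
      rcases hz.2 with h' | h'
      · exact Or.inl (Or.inr h')
      right
      rw [KK_add, h, h', add_zero]
    · rintro ⟨⟨y, hy, z, hz, hyz⟩, h⟩
      by_cases hbb : b
      · refine ⟨LL e y (KK e x), ?_, x - LL e y (KK e x), ?_, by abel⟩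
        · rw [hb, JJ_LL]; exact ⟨hy, Or.inl hbb⟩
        · rw [hc, JJ_sub, JJ_LL, KK_sub, KK_LL, sub_self, ← hyz, add_sub_cancel_left]
          exact ⟨hz, Or.inr rfl⟩
      · refine ⟨LL e y 0, ?_, x - LL e y 0, ?_, by abel⟩
        · rw [hb, JJ_LL, KK_LL]; exact ⟨hy, Or.inr rfl⟩
        · rw [hc, JJ_sub, JJ_LL, KK_sub, KK_LL, sub_zero, ← hyz, add_sub_cancel_left]
          exact ⟨hz, by tauto⟩
  | compl t iht =>
    obtain ⟨b, hb⟩ := iht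
    refine ⟨¬ b, fun x => ?_⟩
    simp only [OLTerm.evalSub]
    have hdef : x ∈ (OLTerm.compl t).evalF (fun i => comapJ e (v i)) ↔
        ∀ y ∈ t.evalF (fun i => comapJ e (v i)), ∑ i, y i * x i = 0 := Iff.rfl
    rw [hdef, Submodule.mem_orthogonal]
    simp only [hb, dot_JK e]
    constructor
    · intro h
      have hre : ∀ u ∈ t.evalSub v, (inner ℂ u (JJ e x)).re = 0 := by
        intro u hu
        have := h (LL e u 0)
        simpa [JJ_LL, KK_LL, hu] using this
      constructor
      · intro u hu
        apply Complex.ext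
        · exact hre u hu
        · have := hre (Complex.I • u) (Submodule.smul_mem _ _ hu)
          rw [inner_smul_left] at this
          simpa using this
      · by_cases hbb : b
        · right
          have := h (LL e 0 (KK e x))
          rw [JJ_LL, KK_LL] at this
          have h0 := this ⟨Submodule.zero_mem _, Or.inl hbb⟩
          rw [inner_zero_left, Complex.zero_re, zero_add] at h0
          ext j
          have := (Finset.sum_eq_zero_iff_of_nonneg (fun j _ => mul_self_nonneg (KK e x j))).mp h0 j
            (Finset.mem_univ _)
          simpa using this
        · exact Or.inl hbb
    · rintro ⟨h1, h2⟩ y ⟨h3, h4⟩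
      rw [h1 _ h3, Complex.zero_re, zero_add]
      have : KK e x = 0 ∨ KK e y = 0 := by tauto
      rcases this with h | h <;> simp [h]

end complexpart

/-- Let `𝔽` be the field of real algebraic numbers.  If an ortholattice term `t` is a
tautology of the subspace ortholattice `L(𝔽^{2^n})` for every `n ≥ 0`, then `t` is a
tautology of the subspace ortholattice `L(ℂ^k)` for every `k ≥ 1`. -/
theorem stmt16 (t : OLTerm)
    (h : ∀ n : ℕ, ∀ v : ℕ → Submodule RealAlg (Fin (2 ^ n) → RealAlg), t.evalF v = ⊤) :
    ∀ k : ℕ, 1 ≤ k → ∀ v : ℕ → Submodule ℂ (EuclideanSpace ℂ (Fin k)), t.evalSub v = ⊤ := by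
  intro k _ v
  have hk : 2 * k ≤ 2 ^ (2 * k) := Nat.lt_two_pow_self.le
  have hcard : Fintype.card (Fin (2 ^ (2 * k))) =
      Fintype.card ((Fin k ⊕ Fin k) ⊕ Fin (2 ^ (2 * k) - 2 * k)) := by
    simp only [Fintype.card_sum, Fintype.card_fin]
    omega
  let e := Fintype.equivOfCardEq hcard
  obtain ⟨b, hb⟩ := complex_eval e v t
  have htop := transfer t (2 ^ (2 * k)) (h (2 * k)) (fun i => comapJ e (v i))
  rw [eq_top_iff]
  intro u _
  have := (hb (LL e u 0)).mp (by rw [htop]; trivial)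
  rw [JJ_LL] at this
  exact this.1
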